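/- The solvable Leibniz algebra R_n is complete: its center is zero, and every derivation of R_n is an inner derivation (a right multiplication operator R_a for some a ∈ R_n); in fact every derivation is a linear combination of R_{f₁},…,R_{f_k}, R_{y₁},…,R_{y_{k+1}}. -/

import Mathlib

noncomputable section

open Finset

/-- Underlying space of `R_n`: basis `e₁,…,e_n`, `f₁,…,f_k`, `y₁,…,y_{k+1}`. -/
abbrev LR (n k : ℕ) := (Fin n ⊕ (Fin k ⊕ Fin (k + 1))) → ℂ

/-- `1`-indexed basis vector `eᵢ` (zero out of range). -/
def Eb (n k : ℕ) (i : ℕ) : LR n k := fun s =>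
  match s with
  | .inl a => if (a : ℕ) + 1 = i then 1 else 0
  | _ => 0

/-- `1`-indexed basis vector `fᵢ` (zero out of range). -/
def Fb (n k : ℕ) (i : ℕ) : LR n k := fun s =>
  match s with
  | .inr (.inl a) => if (a : ℕ) + 1 = i then 1 else 0
  | _ => 0

/-- `1`-indexed basis vector `yᵢ` (zero out of range). -/
def Yb (n k : ℕ) (i : ℕ) : LR n k := fun s =>
  match s with
  | .inr (.inr a) => if (a : ℕ) + 1 = i then 1 else 0
  | _ => 0

/-- Structure constants of `R_n`:
`[eᵢ,f₁] = e_{i+1}` (1 ≤ i ≤ n-k), `[e₁,fᵢ] = e_{n-k+i}` (2 ≤ i ≤ k),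
`[fᵢ,yᵢ] = fᵢ = -[yᵢ,fᵢ]` (1 ≤ i ≤ k), `[eᵢ,y_{k+1}] = eᵢ` (1 ≤ i ≤ n),
`[eᵢ,y₁] = (i-1)eᵢ` (1 ≤ i ≤ n-k+1), `[e_{n-k+i},yᵢ] = e_{n-k+i}` (2 ≤ i ≤ k). -/
def cR (n k : ℕ) :
    (Fin n ⊕ (Fin k ⊕ Fin (k + 1))) → (Fin n ⊕ (Fin k ⊕ Fin (k + 1))) → LR n k
  | .inl a, .inr (.inl b) =>
      (if (b : ℕ) = 0 ∧ (a : ℕ) + 1 ≤ n - k then Eb n k ((a : ℕ) + 2) else 0)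
      + (if (a : ℕ) = 0 ∧ 1 ≤ (b : ℕ) then Eb n k (n - k + (b : ℕ) + 1) else 0)
  | .inr (.inl a), .inr (.inr b) =>
      if (a : ℕ) = (b : ℕ) then Fb n k ((a : ℕ) + 1) else 0
  | .inr (.inr a), .inr (.inl b) =>
      if (a : ℕ) = (b : ℕ) then -Fb n k ((b : ℕ) + 1) else 0
  | .inl a, .inr (.inr b) =>
      (if (b : ℕ) = k then Eb n k ((a : ℕ) + 1) else 0)
      + (if (b : ℕ) = 0 ∧ (a : ℕ) + 1 ≤ n - k + 1 then ((a : ℕ) : ℂ) • Eb n k ((a : ℕ) + 1) else 0)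
      + (if 1 ≤ (b : ℕ) ∧ (b : ℕ) + 1 ≤ k ∧ (a : ℕ) + 1 = n - k + (b : ℕ) + 1
          then Eb n k ((a : ℕ) + 1) else 0)
  | _, _ => 0

/-- Bracket of `R_n`. -/
def brkR (n k : ℕ) (x y : LR n k) : LR n k :=
  ∑ i, ∑ j, (x i * y j) • cR n k i j

/-!
Right multiplication by each `yⱼ` is diagonal in the basis. Applying a derivation `d` to
`[yᵢ, yⱼ] = 0`, `[fᵢ, yᵢ] = fᵢ = -[yᵢ, fᵢ]` and the products `[e₁, yⱼ]` therefore shows that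
`d yᵢ ∈ ℂ fᵢ` for `i ≤ k`, `d y_{k+1} = 0` and `d fᵢ ∈ ℂ fᵢ`, and that `d e₁` is determined by its
`e₁`-coordinate and the `d yᵢ`. Right multiplication by a suitable combination of the `fᵢ` and `yⱼ`
takes the same values on `e₁`, the `fᵢ` and the `yⱼ`, and it is a derivation by the Leibniz
identity. Since these elements generate `R_n`, it equals `d`.
-/

namespace LR

variable {n k : ℕ}

/-- The basis vector `e_{a+1}`; indices in `e`, `f`, `y` start at `0`, those in `Eb`, `Fb`, `Yb`
at `1`. -/
def e (a : Fin n) : LR n k := Pi.single (.inl a) 1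

/-- The basis vector `f_{i+1}`. -/
def f (i : Fin k) : LR n k := Pi.single (.inr (.inl i)) 1

/-- The basis vector `y_{j+1}`. -/
def y (j : Fin (k + 1)) : LR n k := Pi.single (.inr (.inr j)) 1

@[simp] theorem e_inl (a b : Fin n) : (e a : LR n k) (.inl b) = if b = a then 1 else 0 := by
  simp [e, Pi.single_apply]

@[simp] theorem e_inr (a : Fin n) (s) : (e a : LR n k) (.inr s) = 0 := by simp [e]

@[simp] theorem f_inl (i : Fin k) (a : Fin n) : f i (.inl a) = 0 := by simp [f]

@[simp] theorem f_inr_inl (i i' : Fin k) :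
    (f i : LR n k) (.inr (.inl i')) = if i' = i then 1 else 0 := by
  simp [f, Pi.single_apply]

@[simp] theorem f_inr_inr (i : Fin k) (j) : (f i : LR n k) (.inr (.inr j)) = 0 := by simp [f]

@[simp] theorem y_inl (j : Fin (k + 1)) (a : Fin n) : y j (.inl a) = 0 := by simp [y]

@[simp] theorem y_inr_inl (j : Fin (k + 1)) (i) : (y j : LR n k) (.inr (.inl i)) = 0 := by simp [y]

@[simp] theorem y_inr_inr (j j' : Fin (k + 1)) :
    (y j : LR n k) (.inr (.inr j')) = if j' = j then 1 else 0 := by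
  simp [y, Pi.single_apply]

/-- For `a ≠ 0`, the index such that `e a = [e (parent k a), f (label a)]`. -/
def parent (k : ℕ) (a : Fin n) : Fin n :=
  ⟨if (a : ℕ) ≤ n - k then a - 1 else 0, by have := a.isLt; split_ifs <;> omega⟩

/-- For `a ≠ 0`, the index such that `e a = [e (parent k a), f (label a)]`. The subtraction
truncates to `0` on the chain `a ≤ n - k` generated from `e 0` by `f 0`. -/
def label [NeZero k] (a : Fin n) : Fin k :=
  ⟨a - (n - k), by have := a.isLt; have := NeZero.pos k; omega⟩

/-- The eigenvalue of right multiplication by `y (label a).castSucc` on `e a`. -/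
def multiplicity (n k : ℕ) (a : Fin n) : ℂ := if (a : ℕ) ≤ n - k then a else 1

/-- The weight of `e a`: the linear functional sending `v` to the `e a`-coordinate of `[e a, v]`. -/
def weight [NeZero k] (a : Fin n) (v : LR n k) : ℂ :=
  v (.inr (.inr (Fin.last k))) + multiplicity n k a * v (.inr (.inr (label a).castSucc))

section Coordinates

theorem ext_coordinates {x v : LR n k} (he : ∀ a, x (.inl a) = v (.inl a))
    (hf : ∀ i, x (.inr (.inl i)) = v (.inr (.inl i)))
    (hy : ∀ j, x (.inr (.inr j)) = v (.inr (.inr j))) : x = v :=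
  funext (Sum.rec he (Sum.rec hf hy))

theorem cR_e_f_apply_e [NeZero n] [NeZero k] (a b : Fin n) (i : Fin k) :
    cR n k (.inl b) (.inr (.inl i)) (.inl a) =
      if i = label a then if b = parent k a then if a = 0 then 0 else 1 else 0 else 0 := by
  simp only [cR, Eb, label, parent, Fin.ext_iff, Fin.val_zero, Pi.add_apply, ite_apply,
    Pi.zero_apply]
  grind

theorem cR_e_y_apply_e [NeZero k] (a b : Fin n) (j : Fin (k + 1)) :
    cR n k (.inl b) (.inr (.inr j)) (.inl a) =
      if b = a then
        (if j = Fin.last k then 1 else 0) +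
          (if j = (label a).castSucc then multiplicity n k a else 0)
      else 0 := by
  simp only [cR, Eb, label, multiplicity, Fin.ext_iff, Pi.add_apply, ite_apply, Pi.zero_apply,
    Pi.smul_apply, Fin.val_last, Fin.val_castSucc, smul_eq_mul]
  grind

variable (x v : LR n k)

theorem brkR_apply_e [NeZero n] [NeZero k] (a : Fin n) :
    brkR n k x v (.inl a) =
      x (.inl a) * weight a v +
        if a = 0 then 0 else x (.inl (parent k a)) * v (.inr (.inl (label a))) := by
  have cR_inr_left (s t) : cR n k (.inr s) t (.inl a) = 0 := by
    rcases s with s | s <;> rcases t with _ | _ | _ <;> simp [cR, Fb, ite_apply]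
  have cR_e_e (b b') : cR n k (.inl b) (.inl b') (.inl a) = 0 := rfl
  simp only [brkR, Fintype.sum_sum_type, Finset.sum_apply, Pi.add_apply, Pi.smul_apply,
    smul_eq_mul, sum_add_distrib, cR_inr_left, cR_e_e, cR_e_f_apply_e, cR_e_y_apply_e, weight,
    mul_zero, sum_const_zero, add_zero, zero_add, mul_ite, mul_one, mul_add, sum_ite_irrel,
    sum_ite_eq', mem_univ, if_true]
  ring

theorem brkR_apply_f (i : Fin k) :
    brkR n k x v (.inr (.inl i)) =
      x (.inr (.inl i)) * v (.inr (.inr i.castSucc)) -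
        x (.inr (.inr i.castSucc)) * v (.inr (.inl i)) := by
  have cR_e (a t) : cR n k (.inl a) t (.inr (.inl i)) = 0 := by
    rcases t with _ | _ | _ <;> simp [cR, Eb, ite_apply]
  have cR_inr_e (s a) : cR n k (.inr s) (.inl a) (.inr (.inl i)) = 0 := by
    rcases s with s | s <;> rfl
  have cR_f_f (i' i'') : cR n k (.inr (.inl i')) (.inr (.inl i'')) (.inr (.inl i)) = 0 := rfl
  have cR_y_y (j j') : cR n k (.inr (.inr j)) (.inr (.inr j')) (.inr (.inl i)) = 0 := rfl
  have cR_f_y (i' j) : cR n k (.inr (.inl i')) (.inr (.inr j)) (.inr (.inl i)) =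
      if i' = i then if j = i.castSucc then 1 else 0 else 0 := by
    simp only [cR, Fb, ite_apply, Pi.zero_apply, Fin.ext_iff, Fin.val_castSucc]
    grind
  have cR_y_f (i' j) : cR n k (.inr (.inr j)) (.inr (.inl i')) (.inr (.inl i)) =
      if j = i.castSucc then if i' = i then -1 else 0 else 0 := by
    simp only [cR, Fb, ite_apply, Pi.zero_apply, Fin.ext_iff, Fin.val_castSucc, Pi.neg_apply]
    grind
  simp only [brkR, Fintype.sum_sum_type, Finset.sum_apply, Pi.add_apply, Pi.smul_apply,
    smul_eq_mul, cR_e, cR_inr_e, cR_f_f, cR_y_y, cR_f_y, cR_y_f, mul_zero, sum_const_zero,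
    add_zero, zero_add, mul_ite, mul_one, sum_ite_irrel, sum_ite_eq', mem_univ, if_true]
  ring

theorem brkR_apply_y (j : Fin (k + 1)) : brkR n k x v (.inr (.inr j)) = 0 := by
  have cR_y (s t) : cR n k s t (.inr (.inr j)) = 0 := by
    rcases s with s | s | s <;> rcases t with _ | _ | _ <;> simp [cR, Eb, Fb, ite_apply]
  simp [brkR, cR_y]

theorem weight_brkR [NeZero k] (a : Fin n) : weight a (brkR n k x v) = 0 := by
  simp [weight, brkR_apply_y]

end Coordinates

section Combinatorics

variable [NeZero n] {a b : Fin n}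

theorem multiplicity_zero : multiplicity n k 0 = 0 := by
  simp [multiplicity]

theorem multiplicity_ne_zero (ha : a ≠ 0) : multiplicity n k a ≠ 0 := by
  unfold multiplicity
  split_ifs <;> simp [ha]

theorem multiplicity_of_parent_eq_zero (ha : a ≠ 0) (hp : parent k a = 0) :
    multiplicity n k a = 1 := by
  have : (a : ℕ) ≤ n - k → (a : ℕ) = 1 := by
    simp only [parent, Fin.ext_iff, Fin.val_zero, ne_eq] at ha hp
    grind
  unfold multiplicity
  split_ifs <;> simp_all

theorem parent_lt (ha : a ≠ 0) : parent k a < a := by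
  simp only [parent, Fin.lt_def, Fin.ext_iff, Fin.val_zero, ne_eq] at *
  grind

variable [NeZero k]

theorem parent_eq_zero_or_label_parent (k : ℕ) [NeZero k] (a : Fin n) :
    parent k a = 0 ∨ (label (parent k a) : Fin k) = label a := by
  simp only [parent, label, Fin.ext_iff, Fin.val_zero]
  grind

theorem eq_of_parent_eq_of_label_eq (ha : a ≠ 0) (hb : b ≠ 0)
    (hp : parent k a = parent k b) (hl : (label a : Fin k) = label b) : a = b := by
  simp only [parent, label, Fin.ext_iff, Fin.val_zero, ne_eq] at *
  grind

theorem multiplicity_eq_multiplicity_parent_add_one (ha : a ≠ 0)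
    (hl : (label (parent k a) : Fin k) = label a) :
    multiplicity n k a = multiplicity n k (parent k a) + 1 := by
  obtain ⟨ha_le, hp_le, hp⟩ :
      (a : ℕ) ≤ n - k ∧ (parent k a : ℕ) ≤ n - k ∧ (a : ℕ) = parent k a + 1 := by
    simp only [parent, label, Fin.ext_iff, Fin.val_zero, ne_eq] at *
    grind
  rw [multiplicity, multiplicity, if_pos ha_le, if_pos hp_le, hp, Nat.cast_add_one]

theorem weight_eq_weight_parent_add (ha : a ≠ 0) (v : LR n k) :
    weight a v = weight (parent k a) v + v (.inr (.inr (label a).castSucc)) := by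
  rcases parent_eq_zero_or_label_parent k a with hp | hl
  · simp only [weight, hp, multiplicity_zero, multiplicity_of_parent_eq_zero ha hp]
    ring
  · simp only [weight, hl, multiplicity_eq_multiplicity_parent_add_one ha hl]
    ring

end Combinatorics

section Products

variable (v : LR n k)

theorem brkR_y_right_apply_f (j : Fin (k + 1)) (i : Fin k) :
    brkR n k v (y j) (.inr (.inl i)) = if i.castSucc = j then v (.inr (.inl i)) else 0 := by
  simp [brkR_apply_f]

variable [NeZero n] [NeZero k]

theorem brkR_y_last_right_apply_e (a : Fin n) :
    brkR n k v (y (Fin.last k)) (.inl a) = v (.inl a) := by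
  simp [brkR_apply_e, weight]

theorem brkR_y_castSucc_right_apply_e (i : Fin k) (a : Fin n) :
    brkR n k v (y i.castSucc) (.inl a) =
      if label a = i then v (.inl a) * multiplicity n k a else 0 := by
  simp [brkR_apply_e, weight, (Fin.castSucc_ne_last i).symm]

theorem brkR_y_castSucc_left (i : Fin k) :
    brkR n k (y i.castSucc) v = -v (.inr (.inl i)) • f i := by
  refine ext_coordinates (fun a => ?_) (fun i' => ?_) fun j => ?_
  · simp [brkR_apply_e]
  · by_cases h : i' = i <;> simp [brkR_apply_f, h]
  · simp [brkR_apply_y]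

theorem brkR_y_last_left : brkR n k (y (Fin.last k)) v = 0 :=
  ext_coordinates (by simp [brkR_apply_e]) (by simp [brkR_apply_f]) (by simp [brkR_apply_y])

theorem brkR_f_left (i : Fin k) : brkR n k (f i) v = v (.inr (.inr i.castSucc)) • f i := by
  refine ext_coordinates (fun a => ?_) (fun i' => ?_) fun j => ?_
  · simp [brkR_apply_e]
  · by_cases h : i' = i <;> simp [brkR_apply_f, h]
  · simp [brkR_apply_y]

theorem brkR_e_zero_left_apply_e_zero :
    brkR n k (e 0) v (.inl 0) = v (.inr (.inr (Fin.last k))) := by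
  simp [brkR_apply_e, weight, multiplicity_zero]

theorem brkR_e_zero_left_apply_e {a : Fin n} (ha : a ≠ 0) :
    brkR n k (e 0) v (.inl a) = if parent k a = 0 then v (.inr (.inl (label a))) else 0 := by
  simp [brkR_apply_e, ha]

theorem brkR_y_y (j j' : Fin (k + 1)) : brkR n k (y j) (y j') = 0 :=
  ext_coordinates (by simp [brkR_apply_e]) (by simp [brkR_apply_f]) (by simp [brkR_apply_y])

theorem brkR_e_zero_y (j : Fin (k + 1)) :
    brkR n k (e 0) (y j) = if Fin.last k = j then e 0 else 0 := by
  refine ext_coordinates (fun a => ?_) (fun i => ?_) fun j' => ?_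
  · by_cases ha : a = 0
    · simp [ha, brkR_e_zero_left_apply_e_zero, ite_apply]
    · simp [ha, brkR_e_zero_left_apply_e, ite_apply]
  · simp [brkR_apply_f, ite_apply]
  · simp [brkR_apply_y, ite_apply]

theorem brkR_e_parent_f_label {a : Fin n} (ha : a ≠ 0) :
    brkR n k (e (parent k a)) (f (label a)) = e a := by
  refine ext_coordinates (fun b => ?_) (fun i => ?_) fun j => ?_
  · simp only [brkR_apply_e, weight, f_inr_inr, f_inr_inl, e_inl]
    grind [eq_of_parent_eq_of_label_eq]
  · simp [brkR_apply_f]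
  · simp [brkR_apply_y]

end Products

theorem eq_zero_of_mem_center [NeZero n] [NeZero k] {z : LR n k}
    (hz : ∀ u : LR n k, brkR n k z u = 0 ∧ brkR n k u z = 0) : z = 0 := by
  refine ext_coordinates (fun a => ?_) (fun i => ?_) fun j => ?_
  · simpa [brkR_y_last_right_apply_e] using congrFun (hz (y (Fin.last k))).1 (.inl a)
  · simpa [brkR_y_right_apply_f] using congrFun (hz (y i.castSucc)).1 (.inr (.inl i))
  · cases j using Fin.lastCases with
    | last => simpa [brkR_e_zero_left_apply_e_zero] using congrFun (hz (e 0)).2 (.inl 0)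
    | cast i => simpa [brkR_f_left] using congrFun (hz (f i)).2 (.inr (.inl i))

section Derivations

/-- A linear endomorphism of `R_n` satisfying the Leibniz rule for the bracket. -/
def IsDerivation (d : LR n k →ₗ[ℂ] LR n k) : Prop :=
  ∀ u v, d (brkR n k u v) = brkR n k (d u) v + brkR n k u (d v)

/-- The bracket of `R_n` as a bilinear map. -/
def bracket (n k : ℕ) : LR n k →ₗ[ℂ] LR n k →ₗ[ℂ] LR n k :=
  LinearMap.mk₂ ℂ (brkR n k)
    (fun x x' v => by simp only [brkR, Pi.add_apply, add_mul, add_smul, sum_add_distrib])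
    (fun c x v => by simp only [brkR, Pi.smul_apply, smul_eq_mul, smul_sum, mul_assoc, mul_smul])
    (fun x v v' => by simp only [brkR, Pi.add_apply, mul_add, add_smul, sum_add_distrib])
    (fun c x v => by
      simp only [brkR, Pi.smul_apply, smul_eq_mul, smul_sum, ← mul_smul, mul_left_comm])

theorem bracket_apply (x v : LR n k) : bracket n k x v = brkR n k x v := rfl

variable [NeZero n] [NeZero k]

theorem isDerivation_bracket_flip (w : LR n k) : IsDerivation ((bracket n k).flip w) := by
  intro u v
  simp only [LinearMap.flip_apply, bracket_apply]
  refine ext_coordinates (fun a => ?_) (fun i => ?_) fun j => ?_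
  · simp only [Pi.add_apply, brkR_apply_e, weight_brkR, brkR_apply_f]
    by_cases ha : a = 0
    · simp only [ha, if_true]
      ring
    · have hw := weight_eq_weight_parent_add (k := k) ha
      rcases parent_eq_zero_or_label_parent k a with hp | hl
      · simp only [ha, hp, hw, if_true, if_false]
        ring
      · simp only [ha, hl, hw, if_false]
        split_ifs <;> ring
  · simp only [Pi.add_apply, brkR_apply_f, brkR_apply_y]
    ring
  · simp only [Pi.add_apply, brkR_apply_y, add_zero]

namespace IsDerivation

variable {d d' : LR n k →ₗ[ℂ] LR n k} (hd : IsDerivation d)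
include hd

theorem ext_of_generators (hd' : IsDerivation d')
    (he : d (e 0) = d' (e 0)) (hf : ∀ i, d (f i) = d' (f i)) (hy : ∀ j, d (y j) = d' (y j)) :
    d = d' := by
  have he_all (a : Fin n) : d (e a) = d' (e a) := by
    induction a using WellFoundedLT.induction with
    | ind a ih =>
      by_cases ha : a = 0
      · rw [ha, he]
      · rw [← brkR_e_parent_f_label ha, hd, hd', ih _ (parent_lt ha), hf]
  refine (Pi.basisFun ℂ _).ext fun s => ?_
  simp only [Pi.basisFun_apply]
  rcases s with a | i | j
  exacts [he_all a, hf i, hy j]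

theorem apply_y_apply_e (j : Fin (k + 1)) (a : Fin n) : d (y j) (.inl a) = 0 := by
  have h := congrFun (hd (y j) (y (Fin.last k))) (.inl a)
  simpa [brkR_y_y, brkR_y_last_right_apply_e, brkR_apply_e (y j)] using h.symm

theorem apply_y_apply_f_of_ne {j : Fin (k + 1)} {i : Fin k} (hij : i.castSucc ≠ j) :
    d (y j) (.inr (.inl i)) = 0 := by
  have h := congrFun (hd (y j) (y i.castSucc)) (.inr (.inl i))
  simpa [brkR_y_y, brkR_apply_f, hij] using h.symm

theorem apply_y_apply_y (j j' : Fin (k + 1)) : d (y j) (.inr (.inr j')) = 0 := by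
  cases j' using Fin.lastCases with
  | last =>
    have h := congrFun (hd (e 0) (y j)) (.inl 0)
    simpa [brkR_e_zero_y, brkR_apply_e, apply_ite d, ite_apply, weight, multiplicity_zero] using h
  | cast i =>
    have h := congrFun (hd (f i) (y j)) (.inr (.inl i))
    simpa [brkR_f_left, brkR_y_right_apply_f, apply_ite d, ite_apply] using h

theorem apply_y_last : d (y (Fin.last k)) = 0 :=
  ext_coordinates (hd.apply_y_apply_e _)
    (fun i => hd.apply_y_apply_f_of_ne (Fin.castSucc_ne_last i)) (hd.apply_y_apply_y _)

theorem apply_y_castSucc (i : Fin k) :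
    d (y i.castSucc) = d (y i.castSucc) (.inr (.inl i)) • f i := by
  refine ext_coordinates (fun a => ?_) (fun i' => ?_) fun j => ?_
  · simp [hd.apply_y_apply_e]
  · by_cases h : i' = i
    · simp [h]
    · simp [hd.apply_y_apply_f_of_ne ((Fin.castSucc_injective k).ne h), h]
  · simp [hd.apply_y_apply_y]

theorem apply_f (i : Fin k) : d (f i) = d (f i) (.inr (.inl i)) • f i := by
  have brkR_apply_y_f : brkR n k (d (y i.castSucc)) (f i) = 0 := by
    rw [hd.apply_y_castSucc, ← bracket_apply, map_smul, LinearMap.smul_apply, bracket_apply,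
      brkR_f_left, f_inr_inr, zero_smul, smul_zero]
  have h := hd (y i.castSucc) (f i)
  simpa [brkR_apply_y_f, brkR_y_castSucc_left] using h

theorem apply_e_zero_apply_e {a : Fin n} (ha : a ≠ 0) :
    d (e 0) (.inl a) =
      if parent k a = 0 then -d (y (label a).castSucc) (.inr (.inl (label a))) else 0 := by
  have h := congrFun (hd (e 0) (y (label a).castSucc)) (.inl a)
  simp only [brkR_e_zero_y, (Fin.castSucc_ne_last (label a)).symm, if_false, map_zero,
    Pi.zero_apply, Pi.add_apply, brkR_y_castSucc_right_apply_e, if_true,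
    brkR_e_zero_left_apply_e _ ha] at h
  split_ifs at h ⊢ with hp
  · rw [multiplicity_of_parent_eq_zero ha hp, mul_one] at h
    exact eq_neg_of_add_eq_zero_left h.symm
  · simpa [multiplicity_ne_zero ha] using h

theorem apply_e_zero_apply_f (i : Fin k) : d (e 0) (.inr (.inl i)) = 0 := by
  have h := congrFun (hd (e 0) (y (Fin.last k))) (.inr (.inl i))
  simpa [brkR_e_zero_y, brkR_apply_f] using h

theorem apply_e_zero_apply_y (j : Fin (k + 1)) : d (e 0) (.inr (.inr j)) = 0 := by
  have h := congrFun (hd (e 0) (y (Fin.last k))) (.inr (.inr j))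
  simpa [brkR_e_zero_y, brkR_apply_y] using h

end IsDerivation

/-- The element by which a derivation `d` is right multiplication, read off from the values of `d`
on the generators. -/
def implementer (d : LR n k →ₗ[ℂ] LR n k) : LR n k :=
  Sum.elim 0 (Sum.elim (fun i => -d (y i.castSucc) (.inr (.inl i)))
    (Fin.lastCases (d (e 0) (.inl 0)) fun i => d (f i) (.inr (.inl i))))

theorem IsDerivation.eq_bracket_flip_implementer {d : LR n k →ₗ[ℂ] LR n k}
    (hd : IsDerivation d) : d = (bracket n k).flip (implementer d) := by
  refine hd.ext_of_generators (isDerivation_bracket_flip _) ?_ (fun i => ?_) fun j => ?_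
  · rw [LinearMap.flip_apply, bracket_apply]
    refine ext_coordinates (fun a => ?_) (fun i => ?_) fun j => ?_
    · by_cases ha : a = 0
      · simp [ha, brkR_e_zero_left_apply_e_zero, implementer]
      · simp [hd.apply_e_zero_apply_e ha, brkR_e_zero_left_apply_e _ ha, implementer]
    · simp [hd.apply_e_zero_apply_f, brkR_apply_f]
    · simp [hd.apply_e_zero_apply_y, brkR_apply_y]
  · rw [hd.apply_f]
    simp [bracket_apply, brkR_f_left, implementer]
  · cases j using Fin.lastCases with
    | last => simp [hd.apply_y_last, bracket_apply, brkR_y_last_left]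
    | cast i =>
      rw [hd.apply_y_castSucc]
      simp [bracket_apply, brkR_y_castSucc_left, implementer]

end Derivations

section LinearCombinations

theorem sum_Icc_smul_Fb (b : ℕ → ℂ) :
    ∑ i ∈ Icc 1 k, b i • Fb n k i = (Sum.elim 0 (Sum.elim (fun i => b (i + 1)) 0) : LR n k) :=
  ext_coordinates (by simp [Fb]) (by simp [Fb]) (by simp [Fb])

theorem sum_Icc_smul_Yb (c : ℕ → ℂ) :
    ∑ j ∈ Icc 1 (k + 1), c j • Yb n k j =
      (Sum.elim 0 (Sum.elim 0 fun j => c (j + 1)) : LR n k) :=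
  ext_coordinates (by simp [Yb]) (by simp [Yb]) fun j => by simp [Yb, Fin.is_le j]

theorem exists_eq_sum_Fb_add_sum_Yb (β : Fin k → ℂ) (γ : Fin (k + 1) → ℂ) :
    ∃ b c : ℕ → ℂ, (Sum.elim 0 (Sum.elim β γ) : LR n k) =
      ∑ i ∈ Icc 1 k, b i • Fb n k i + ∑ j ∈ Icc 1 (k + 1), c j • Yb n k j := by
  have succ_injective (m : ℕ) : Function.Injective fun i : Fin m => (i : ℕ) + 1 :=
    Nat.succ_injective.comp Fin.val_injective
  refine ⟨Function.extend (fun i : Fin k => (i : ℕ) + 1) β 0,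
    Function.extend (fun j : Fin (k + 1) => (j : ℕ) + 1) γ 0, ?_⟩
  rw [sum_Icc_smul_Fb, sum_Icc_smul_Yb]
  refine ext_coordinates (by simp) (fun i => ?_) fun j => ?_
  · simpa using ((succ_injective k).extend_apply β 0 i).symm
  · simpa using ((succ_injective (k + 1)).extend_apply γ 0 j).symm

end LinearCombinations

end LR

theorem Rn_complete_general (n k : ℕ) (hk : 1 ≤ k) (hkn : k ≤ n) :
    (∀ z : LR n k, (∀ u : LR n k, brkR n k z u = 0 ∧ brkR n k u z = 0) → z = 0) ∧
    (∀ d : LR n k →ₗ[ℂ] LR n k,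
      (∀ u v : LR n k, d (brkR n k u v) = brkR n k (d u) v + brkR n k u (d v)) →
      (∃ a : LR n k, ∀ y : LR n k, d y = brkR n k y a) ∧
      (∃ b c : ℕ → ℂ, ∀ y : LR n k,
        d y = (∑ i ∈ Finset.Icc 1 k, b i • brkR n k y (Fb n k i))
            + ∑ i ∈ Finset.Icc 1 (k + 1), c i • brkR n k y (Yb n k i))) := by
  have : NeZero k := ⟨by omega⟩
  have : NeZero n := ⟨by omega⟩
  refine ⟨fun z => LR.eq_zero_of_mem_center, fun d hd => ?_⟩
  have d_eq (v) : d v = brkR n k v (LR.implementer d) :=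
    LinearMap.congr_fun (LR.IsDerivation.eq_bracket_flip_implementer hd) v
  obtain ⟨b, c, hbc⟩ := LR.exists_eq_sum_Fb_add_sum_Yb (n := n) (k := k) _ _
  refine ⟨⟨_, d_eq⟩, b, c, fun v => ?_⟩
  rw [d_eq, LR.implementer, hbc]
  simp only [← LR.bracket_apply, map_add, map_sum, map_smul]

/-- The solvable Leibniz algebra `R_n` is complete: its center is zero and
every derivation is inner (a right multiplication operator `R_a`); in fact
every derivation is a linear combination of `R_{f₁},…,R_{f_k},R_{y₁},…,R_{y_{k+1}}`. -/
theorem Rn_complete (n k : ℕ) (hk : 1 ≤ k) (hn : 2 * k + 2 ≤ n) :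
    (∀ z : LR n k, (∀ u : LR n k, brkR n k z u = 0 ∧ brkR n k u z = 0) → z = 0) ∧
    (∀ d : LR n k →ₗ[ℂ] LR n k,
      (∀ u v : LR n k, d (brkR n k u v) = brkR n k (d u) v + brkR n k u (d v)) →
      (∃ a : LR n k, ∀ y : LR n k, d y = brkR n k y a) ∧
      (∃ b c : ℕ → ℂ, ∀ y : LR n k,
        d y = (∑ i ∈ Finset.Icc 1 k, b i • brkR n k y (Fb n k i))
            + ∑ i ∈ Finset.Icc 1 (k + 1), c i • brkR n k y (Yb n k i))) :=
  Rn_complete_general n k hk (by omega)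

end
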